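/- Let n ≥ 1, d ∈ ℝ^n with d > 0 entrywise, and y ∈ ℝ^n; let m ∈ {0,…,n−1} and 0 = Δ_0 < Δ_1 < … < Δ_m < Δ_{m+1} = ∑_i d_i be such that th_{d,y} is affine on each interval [Δ_{k−1}, Δ_k] and changes slope at each Δ_k for 1 ≤ k ≤ m. Then for σ, τ ∈ S_n one has E_{d,y}(σ) = E_{d,y}(τ) if and only if I_k^σ = I_k^τ for all k = 1,…,m+1. -/

import Mathlib

open Finset

noncomputable def th {n : ℕ} (d y : Fin n → ℝ) (c : ℝ) : ℝ :=
  sInf ((fun i => (∑ j, max (y j - y i / d i * d j) 0) + y i / d i * c) ''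
    {i : Fin n | 0 < d i})

noncomputable def psum {n : ℕ} (d : Fin n → ℝ) (σ : Equiv.Perm (Fin n)) (j : ℕ) : ℝ :=
  ∑ i ∈ Finset.univ.filter (fun i : Fin n => (i : ℕ) < j), d (σ i)

noncomputable def Emap {n : ℕ} (d y : Fin n → ℝ) (σ : Equiv.Perm (Fin n)) : Fin n → ℝ :=
  fun k => th d y (psum d σ ((σ.symm k : ℕ) + 1)) - th d y (psum d σ (σ.symm k : ℕ))

def dStoch {n : ℕ} (d : Fin n → ℝ) (A : Matrix (Fin n) (Fin n) ℝ) : Prop :=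
  (∀ i j, 0 ≤ A i j) ∧ (∀ j, ∑ i, A i j = 1) ∧ A.mulVec d = d

def Mset {n : ℕ} (d y : Fin n → ℝ) : Set (Fin n → ℝ) :=
  {x | ∃ A : Matrix (Fin n) (Fin n) ℝ, dStoch d A ∧ A.mulVec y = x}

noncomputable def Aentry {n : ℕ} (d : Fin n → ℝ) (σ τ : Equiv.Perm (Fin n))
    (α : ℕ → Fin n) (j k : Fin n) : ℝ :=
  if k = α j.val ∧ (α j.val).val < (α (j.val + 1)).val then
    (psum d τ ((α j.val).val + 1) - psum d σ j.val) / d (τ (α j.val))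
  else if (α j.val).val < k.val ∧ k.val < (α (j.val + 1)).val then 1
  else if (α j.val).val < (α (j.val + 1)).val ∧ k = α (j.val + 1) then
    (psum d σ (j.val + 1) - psum d τ (α (j.val + 1)).val) / d (τ (α (j.val + 1)))
  else if α j.val = α (j.val + 1) ∧ k = α (j.val + 1) then
    d (σ j) / d (τ (α (j.val + 1)))
  else 0

noncomputable def Amat {n : ℕ} (d : Fin n → ℝ) (σ τ : Equiv.Perm (Fin n))
    (α : ℕ → Fin n) : Matrix (Fin n) (Fin n) ℝ :=
  Matrix.of fun p q => Aentry d σ τ α (σ.symm p) (τ.symm q)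

lemma th_concave {n : ℕ} (hn : 1 ≤ n) (d y : Fin n → ℝ) (hd : ∀ i, 0 < d i) :
    ConcaveOn ℝ Set.univ (th d y) := by
  refine ⟨convex_univ, ?_⟩
  intro x _ z _ a b ha hb hab
  have hle : ∀ (i : Fin n) (c : ℝ), th d y c ≤
      (∑ j, max (y j - y i / d i * d j) 0) + y i / d i * c := by
    intro i c
    exact csInf_le (Set.toFinite _).bddBelow ⟨i, hd i, rfl⟩
  have hne : ((fun i => (∑ j, max (y j - y i / d i * d j) 0) + y i / d i * (a • x + b • z)) ''
    {i : Fin n | 0 < d i}).Nonempty := ⟨_, ⟨⟨0, hn⟩, hd _, rfl⟩⟩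
  refine le_csInf hne ?_
  rintro _ ⟨i, -, rfl⟩
  have h1 := mul_le_mul_of_nonneg_left (hle i x) ha
  have h2 := mul_le_mul_of_nonneg_left (hle i z) hb
  simp only [smul_eq_mul]
  have : b = 1 - a := by linarith
  subst this
  nlinarith

lemma psum_eq {n : ℕ} (d : Fin n → ℝ) (σ : Equiv.Perm (Fin n)) (p : ℕ) :
    psum d σ p = ∑ i ∈ Finset.univ.filter (fun i : Fin n => (σ.symm i : ℕ) < p), d i := by
  unfold psum
  refine Finset.sum_equiv σ ?_ ?_
  · intro i; simp
  · intro i _; rfl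

lemma psum_succ {n : ℕ} (d : Fin n → ℝ) (σ : Equiv.Perm (Fin n)) (j : Fin n) :
    psum d σ ((σ.symm j : ℕ) + 1) = psum d σ (σ.symm j : ℕ) + d j := by
  rw [psum_eq, psum_eq]
  have : Finset.univ.filter (fun i : Fin n => (σ.symm i : ℕ) < (σ.symm j : ℕ) + 1) =
      insert j (Finset.univ.filter (fun i : Fin n => (σ.symm i : ℕ) < (σ.symm j : ℕ))) := by
    ext i
    simp only [Finset.mem_filter, Finset.mem_univ, true_and, Finset.mem_insert]
    rw [Nat.lt_succ_iff_lt_or_eq, or_comm]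
    simp [Fin.val_inj]
  rw [this, Finset.sum_insert (by simp), add_comm]

lemma psum_mono {n : ℕ} (d : Fin n → ℝ) (hd : ∀ i, 0 < d i) (σ : Equiv.Perm (Fin n))
    {p q : ℕ} (h : p ≤ q) : psum d σ p ≤ psum d σ q := by
  unfold psum
  refine Finset.sum_le_sum_of_subset_of_nonneg ?_ (fun i _ _ => (hd _).le)
  intro i; simp only [Finset.mem_filter, Finset.mem_univ, true_and]; omega

lemma psum_nonneg {n : ℕ} (d : Fin n → ℝ) (hd : ∀ i, 0 < d i) (σ : Equiv.Perm (Fin n))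
    (p : ℕ) : 0 ≤ psum d σ p := Finset.sum_nonneg (fun i _ => (hd _).le)

lemma psum_le {n : ℕ} (d : Fin n → ℝ) (hd : ∀ i, 0 < d i) (σ : Equiv.Perm (Fin n))
    (p : ℕ) : psum d σ p ≤ ∑ i, d i := by
  rw [psum_eq]
  exact Finset.sum_le_sum_of_subset_of_nonneg (Finset.subset_univ _) (fun i _ _ => (hd _).le)

lemma psum_congr {n : ℕ} (d : Fin n → ℝ) (σ τ : Equiv.Perm (Fin n)) (j : Fin n)
    (h : ∀ i, σ.symm i < σ.symm j ↔ τ.symm i < τ.symm j) :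
    psum d σ (σ.symm j : ℕ) = psum d τ (τ.symm j : ℕ) := by
  rw [psum_eq, psum_eq]
  congr 1
  ext i
  simpa using h i

/-- a concave function agreeing with a line at two points lies below it outside -/
lemma below_line {T : ℝ → ℝ} (hT : ConcaveOn ℝ Set.univ T) {u v s b : ℝ} (huv : u < v)
    (h : ∀ c ∈ Set.Icc u v, T c = s * c + b) (c : ℝ) : T c ≤ s * c + b := by
  have hu := h u ⟨le_rfl, huv.le⟩
  have hv := h v ⟨huv.le, le_rfl⟩
  by_cases h1 : c < u
  · have := hT.slope_anti_adjacent (Set.mem_univ c) (Set.mem_univ v) h1 huv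
    have e : (T v - T u) / (v - u) = s := by
      rw [hu, hv]; have : v - u ≠ 0 := by linarith
      field_simp; ring
    rw [e, le_div_iff₀ (by linarith)] at this
    linarith
  by_cases h2 : v < c
  · have := hT.slope_anti_adjacent (Set.mem_univ u) (Set.mem_univ c) huv h2
    have e : (T v - T u) / (v - u) = s := by
      rw [hu, hv]; have : v - u ≠ 0 := by linarith
      field_simp; ring
    rw [e, div_le_iff₀ (by linarith)] at this
    linarith
  · exact (h c ⟨by linarith, by linarith⟩).le

lemma slopes_le {T : ℝ → ℝ} (hT : ConcaveOn ℝ Set.univ T) {p q a b : ℝ} (hpq : p < q)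
    (hqa : q ≤ a) (hab : a < b) : (T b - T a) * (q - p) ≤ (T q - T p) * (b - a) := by
  have key : (T b - T a) / (b - a) ≤ (T q - T p) / (q - p) := by
    rcases hqa.eq_or_lt with rfl | hlt
    · exact hT.slope_anti_adjacent (Set.mem_univ _) (Set.mem_univ _) hpq hab
    · exact (hT.slope_anti_adjacent (Set.mem_univ _) (Set.mem_univ _) hlt hab).trans
        (hT.slope_anti_adjacent (Set.mem_univ _) (Set.mem_univ _) hpq hlt)
  rwa [div_le_div_iff₀ (by linarith) (by linarith)] at key

/-- strict kink at `C` -/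
def Kink (T : ℝ → ℝ) (C : ℝ) : Prop :=
  ∃ s s' : ℝ, s' < s ∧ (∀ c, T c ≤ T C + s * (c - C)) ∧ (∀ c, T c ≤ T C + s' * (c - C))

lemma slopes_lt_right {T : ℝ → ℝ} (hT : ConcaveOn ℝ Set.univ T) {p q a b C : ℝ} (hpq : p < q)
    (hqa : q ≤ a) (hC : Kink T C) (haC : a < C) (hCb : C < b) :
    (T b - T a) * (q - p) < (T q - T p) * (b - a) := by
  obtain ⟨s, s', hs, h1, h2⟩ := hC
  have h3 := slopes_le hT hpq hqa haC
  have h4 := h1 a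
  have h5 := h2 b
  have hab : (T b - T C) * (C - a) < (T C - T a) * (b - C) := by
    have e1 : T b - T C ≤ s' * (b - C) := by linarith
    have e2 : s * (C - a) ≤ T C - T a := by linarith
    have := mul_le_mul_of_nonneg_right e1 (by linarith : 0 ≤ C - a)
    have := mul_le_mul_of_nonneg_right e2 (by linarith : 0 ≤ b - C)
    have : s' * ((b - C) * (C - a)) < s * ((b - C) * (C - a)) :=
      mul_lt_mul_of_pos_right hs (mul_pos (by linarith) (by linarith))
    linarith
  have h6 : (T b - T a) * (C - a) < (T C - T a) * (b - a) := by linarith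
  have h7 := mul_lt_mul_of_pos_right h6 (by linarith : 0 < q - p)
  have h8 := mul_le_mul_of_nonneg_right h3 (by linarith : 0 ≤ b - a)
  refine lt_of_mul_lt_mul_right (a := C - a) ?_ (by linarith)
  linarith

lemma slopes_lt_left {T : ℝ → ℝ} (hT : ConcaveOn ℝ Set.univ T) {p q a b C : ℝ} (hab : a < b)
    (hqa : q ≤ a) (hC : Kink T C) (hpC : p < C) (hCq : C < q) :
    (T b - T a) * (q - p) < (T q - T p) * (b - a) := by
  obtain ⟨s, s', hs, h1, h2⟩ := hC
  have h3 := slopes_le hT hCq hqa hab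
  have h4 := h1 p
  have h5 := h2 q
  have hpq : (T q - T C) * (C - p) < (T C - T p) * (q - C) := by
    have e1 : T q - T C ≤ s' * (q - C) := by linarith
    have e2 : s * (C - p) ≤ T C - T p := by linarith
    have := mul_le_mul_of_nonneg_right e1 (by linarith : 0 ≤ C - p)
    have := mul_le_mul_of_nonneg_right e2 (by linarith : 0 ≤ q - C)
    have : s' * ((q - C) * (C - p)) < s * ((q - C) * (C - p)) :=
      mul_lt_mul_of_pos_right hs (mul_pos (by linarith) (by linarith))
    linarith
  have h6 : (T q - T C) * (q - p) < (T q - T p) * (q - C) := by linarith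
  have h7 := mul_lt_mul_of_pos_right h6 (by linarith : 0 < b - a)
  have h8 := mul_le_mul_of_nonneg_right h3 (by linarith : 0 ≤ q - p)
  refine lt_of_mul_lt_mul_right (a := q - C) ?_ (by linarith)
  linarith

lemma dichotomy {Δ : ℕ → ℝ} (m : ℕ) {a b : ℝ} (ha : Δ 0 ≤ a) (hab : a < b)
    (hb : b ≤ Δ (m + 1)) :
    (∃ k, 1 ≤ k ∧ k ≤ m ∧ a < Δ k ∧ Δ k < b) ∨
    (∃ k, 1 ≤ k ∧ k ≤ m + 1 ∧ Δ (k - 1) ≤ a ∧ b ≤ Δ k) := by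
  induction m with
  | zero => exact Or.inr ⟨1, le_rfl, le_rfl, ha, hb⟩
  | succ m ih =>
    by_cases h1 : b ≤ Δ (m + 1)
    · rcases ih h1 with ⟨k, h⟩ | ⟨k, h⟩
      · exact Or.inl ⟨k, h.1, by omega, h.2.2⟩
      · exact Or.inr ⟨k, h.1, by omega, h.2.2⟩
    · push Not at h1
      by_cases h2 : a < Δ (m + 1)
      · exact Or.inl ⟨m + 1, by omega, le_rfl, h2, h1⟩
      · exact Or.inr ⟨m + 2, by omega, le_rfl, not_lt.mp h2, hb⟩

lemma hit_iff {a b u v : ℝ} (hab : a < b) (huv : u < v) :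
    (Set.Icc a b ∩ Set.Ioo u v).Nonempty ↔ a < v ∧ u < b := by
  constructor
  · rintro ⟨x, ⟨h1, h2⟩, h3, h4⟩
    exact ⟨h1.trans_lt h4, h3.trans_le h2⟩
  · rintro ⟨h1, h2⟩
    obtain ⟨x, hx1, hx2⟩ := exists_between (show max a u < min b v from
      max_lt (lt_min hab h1) (lt_min h2 huv))
    rw [max_lt_iff] at hx1
    rw [lt_min_iff] at hx2
    exact ⟨x, ⟨hx1.1.le, hx2.1.le⟩, hx1.2, hx2.2⟩

/-- Two permutations yield the same extreme point iff the index sets I_k^σ and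
I_k^τ coincide for every affine-linear region of the thermomajorization curve. -/
theorem stmt12 (n : ℕ) (hn : 1 ≤ n) (d y : Fin n → ℝ) (hd : ∀ i, 0 < d i)
    (m : ℕ) (hm : m ≤ n - 1) (Δ : ℕ → ℝ) (s b : ℕ → ℝ)
    (hΔ0 : Δ 0 = 0) (hΔlast : Δ (m + 1) = ∑ i, d i)
    (hΔmono : ∀ k ≤ m, Δ k < Δ (k + 1))
    (haff : ∀ k, 1 ≤ k → k ≤ m + 1 → ∀ c ∈ Set.Icc (Δ (k - 1)) (Δ k),
      th d y c = s k * c + b k)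
    (hslope : ∀ k, 1 ≤ k → k ≤ m → s k ≠ s (k + 1))
    (σ τ : Equiv.Perm (Fin n)) :
    Emap d y σ = Emap d y τ ↔
      ∀ k, 1 ≤ k → k ≤ m + 1 →
        {j : Fin n |
          (Set.Icc (psum d σ (σ.symm j).val) (psum d σ ((σ.symm j).val + 1)) ∩
            Set.Ioo (Δ (k - 1)) (Δ k)).Nonempty} =
        {j : Fin n |
          (Set.Icc (psum d τ (τ.symm j).val) (psum d τ ((τ.symm j).val + 1)) ∩
            Set.Ioo (Δ (k - 1)) (Δ k)).Nonempty} := by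
  have hT := th_concave hn d y hd
  have hmono : ∀ k l, k ≤ l → l ≤ m + 1 → Δ k ≤ Δ l := by
    intro k l hkl
    induction l, hkl using Nat.le_induction with
    | base => intro _; exact le_rfl
    | succ l hl ih => intro h; exact (ih (by omega)).trans (hΔmono l (by omega)).le
  have hstep : ∀ k, 1 ≤ k → k ≤ m + 1 → Δ (k - 1) < Δ k := by
    intro k h1 h2
    have := hΔmono (k - 1) (by omega)
    rwa [Nat.sub_add_cancel h1] at this
  have hline : ∀ k, 1 ≤ k → k ≤ m + 1 → ∀ c, th d y c ≤ s k * c + b k := fun k h1 h2 c =>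
    below_line hT (hstep k h1 h2) (haff k h1 h2) c
  have hat : ∀ k, 1 ≤ k → k ≤ m → th d y (Δ k) = s k * Δ k + b k ∧
      th d y (Δ k) = s (k + 1) * Δ k + b (k + 1) := by
    intro k h1 h2
    refine ⟨haff k h1 (by omega) _ ⟨(hstep k h1 (by omega)).le, le_rfl⟩, ?_⟩
    exact haff (k + 1) (by omega) (by omega) _ ⟨le_rfl, (hΔmono k h2).le⟩
  have hsdec : ∀ k, 1 ≤ k → k ≤ m → s (k + 1) < s k := by
    intro k h1 h2
    refine lt_of_le_of_ne ?_ (hslope k h1 h2).symm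
    have hs := hstep k h1 (by omega)
    have e1 := haff k h1 (by omega) (Δ (k - 1)) ⟨le_rfl, hs.le⟩
    have e2 := hline (k + 1) (by omega) (by omega) (Δ (k - 1))
    obtain ⟨e3, e4⟩ := hat k h1 h2
    by_contra hcon
    push Not at hcon
    have := mul_lt_mul_of_pos_right hcon (by linarith : 0 < Δ k - Δ (k - 1))
    linarith
  have hsanti : ∀ k l, 1 ≤ k → k < l → l ≤ m + 1 → s l < s k := by
    intro k l hk hkl
    induction l, hkl using Nat.le_induction with
    | base => intro h; exact hsdec k hk (by omega)
    | succ l hl ih => intro h; exact (hsdec l (by omega) (by omega)).trans (ih (by omega))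
  have hkink : ∀ k, 1 ≤ k → k ≤ m → Kink (th d y) (Δ k) := by
    intro k h1 h2
    obtain ⟨e3, e4⟩ := hat k h1 h2
    refine ⟨s k, s (k + 1), hsdec k h1 h2, fun c => ?_, fun c => ?_⟩
    · have := hline k h1 (by omega) c; linarith
    · have := hline (k + 1) (by omega) (by omega) c; linarith
  -- start points
  set A : Equiv.Perm (Fin n) → Fin n → ℝ := fun σ j => psum d σ (σ.symm j : ℕ) with hA
  have hE : ∀ (σ : Equiv.Perm (Fin n)) j,
      Emap d y σ j = th d y (A σ j + d j) - th d y (A σ j) := by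
    intro σ j; simp only [Emap, psum_succ, hA]
  have hA0 : ∀ σ j, Δ 0 ≤ A σ j := fun σ j => by rw [hΔ0]; exact psum_nonneg d hd σ _
  have hAl : ∀ σ j, A σ j + d j ≤ Δ (m + 1) := fun σ j => by
    rw [hΔlast, ← psum_succ]; exact psum_le d hd σ _
  have hord : ∀ (σ : Equiv.Perm (Fin n)) i j, σ.symm i < σ.symm j → A σ i + d i ≤ A σ j := by
    intro σ i j h
    rw [← psum_succ]
    exact psum_mono d hd σ h
  have htri : ∀ (σ : Equiv.Perm (Fin n)) i j, i ≠ j → ¬ σ.symm i < σ.symm j →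
      σ.symm j < σ.symm i := by
    intro σ i j hij h
    exact lt_of_le_of_ne (not_lt.mp h) (fun h => hij (σ.symm.injective h).symm)
  have hlt : ∀ σ j, A σ j < A σ j + d j := fun σ j => by linarith [hd j]
  have hdich : ∀ σ j, _ := fun σ j => dichotomy m (hA0 σ j) (hlt σ j) (hAl σ j)
  have hhit : ∀ (σ : Equiv.Perm (Fin n)) j k, 1 ≤ k → k ≤ m + 1 →
      ((Set.Icc (psum d σ (σ.symm j).val) (psum d σ ((σ.symm j).val + 1)) ∩
            Set.Ioo (Δ (k - 1)) (Δ k)).Nonempty ↔ A σ j < Δ k ∧ Δ (k - 1) < A σ j + d j) := by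
    intro σ j k h1 h2
    rw [psum_succ]
    exact hit_iff (hlt σ j) (hstep k h1 h2)
  have hreg : ∀ σ j k, 1 ≤ k → k ≤ m + 1 → Δ (k - 1) ≤ A σ j → A σ j + d j ≤ Δ k →
      Emap d y σ j = s k * d j := by
    intro σ j k h1 h2 h3 h4
    have := hlt σ j
    rw [hE, haff k h1 h2 _ ⟨by linarith, h4⟩, haff k h1 h2 _ ⟨h3, by linarith⟩]
    ring
  have hregu : ∀ σ j k, 1 ≤ k → k ≤ m + 1 → Δ (k - 1) ≤ A σ j → A σ j + d j ≤ Δ k →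
      ∀ l, 1 ≤ l → l ≤ m + 1 → ((A σ j < Δ l ∧ Δ (l - 1) < A σ j + d j) ↔ l = k) := by
    intro σ j k h1 h2 h3 h4 l hl1 hl2
    have := hlt σ j
    constructor
    · rintro ⟨h5, h6⟩
      rcases lt_trichotomy l k with h | h | h
      · have := hmono l (k - 1) (by omega) (by omega); linarith
      · exact h
      · have := hmono k (l - 1) (by omega) (by omega); linarith
    · rintro rfl
      exact ⟨by linarith, by linarith⟩
  constructor
  · intro hEq
    -- crossing elements start at the same point
    have cross : ∀ σ τ : Equiv.Perm (Fin n), Emap d y σ = Emap d y τ → ∀ j k, 1 ≤ k → k ≤ m →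
        A σ j < Δ k → Δ k < A σ j + d j → A σ j = A τ j := by
      intro σ τ hEq j k h1 h2 h3 h4
      apply psum_congr
      intro i
      by_cases hij : i = j
      · subst hij; simp
      have weak : ∀ i j, τ.symm i < τ.symm j →
          Emap d y σ j * d i ≤ Emap d y σ i * d j := by
        intro i j h
        rw [hEq, hE, hE]
        have := slopes_le hT (hlt τ i) (hord τ i j h) (hlt τ j)
        simpa using this
      constructor
      · intro h
        by_contra hcon
        have w := weak j i (htri τ i j hij hcon)
        have st := slopes_lt_right hT (hlt σ i) (hord σ i j h) (hkink k h1 h2) h3 h4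
        rw [hE, hE] at w
        simp only [add_sub_cancel_left] at st
        linarith
      · intro h
        by_contra hcon
        have w := weak i j h
        have st := slopes_lt_left hT (hlt σ i) (hord σ j i (htri σ i j hij hcon))
          (hkink k h1 h2) h3 h4
        rw [hE, hE] at w
        simp only [add_sub_cancel_left] at st
        linarith
    intro k hk1 hk2
    ext j
    simp only [Set.mem_setOf_eq]
    rw [hhit σ j k hk1 hk2, hhit τ j k hk1 hk2]
    rcases hdich σ j with ⟨l, l1, l2, l3, l4⟩ | ⟨l, l1, l2, l3, l4⟩
    · rw [cross σ τ hEq j l l1 l2 l3 l4]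
    rcases hdich τ j with ⟨r, r1, r2, r3, r4⟩ | ⟨r, r1, r2, r3, r4⟩
    · rw [cross τ σ hEq.symm j r r1 r2 r3 r4]
    rw [hregu σ j l l1 l2 l3 l4 k hk1 hk2, hregu τ j r r1 r2 r3 r4 k hk1 hk2]
    have e1 := hreg σ j l l1 l2 l3 l4
    have e2 := hreg τ j r r1 r2 r3 r4
    rw [hEq, e2] at e1
    have e3 := mul_right_cancel₀ (hd j).ne' e1
    have : l = r := by
      rcases lt_trichotomy l r with h | h | h
      · have := hsanti l r l1 h r2; linarith
      · exact h
      · have := hsanti r l r1 h l2; linarith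
    rw [this]
  · intro hI
    have hI' : ∀ k, 1 ≤ k → k ≤ m + 1 → ∀ j, ((A σ j < Δ k ∧ Δ (k - 1) < A σ j + d j) ↔
        (A τ j < Δ k ∧ Δ (k - 1) < A τ j + d j)) := by
      intro k h1 h2 j
      rw [← hhit σ j k h1 h2, ← hhit τ j k h1 h2]
      exact Set.ext_iff.mp (hI k h1 h2) j
    have hcr : ∀ σ τ : Equiv.Perm (Fin n), (∀ k, 1 ≤ k → k ≤ m + 1 → ∀ j,
        ((A σ j < Δ k ∧ Δ (k - 1) < A σ j + d j) ↔
        (A τ j < Δ k ∧ Δ (k - 1) < A τ j + d j))) → ∀ j k, 1 ≤ k → k ≤ m →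
        A σ j < Δ k → Δ k < A σ j + d j → A τ j < Δ k ∧ Δ k < A τ j + d j := by
      intro σ τ h j k h1 h2 h3 h4
      have c1 := (h k h1 (by omega) j).1 ⟨h3, (hstep k h1 (by omega)).trans h4⟩
      have c2 := (h (k + 1) (by omega) (by omega) j).1 ⟨h3.trans (hΔmono k h2), h4⟩
      exact ⟨c1.1, c2.2⟩
    have hsub : ∀ σ τ : Equiv.Perm (Fin n), (∀ k, 1 ≤ k → k ≤ m + 1 → ∀ j,
        ((A σ j < Δ k ∧ Δ (k - 1) < A σ j + d j) ↔
        (A τ j < Δ k ∧ Δ (k - 1) < A τ j + d j))) → ∀ j k, 1 ≤ k → k ≤ m →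
        A σ j < Δ k → Δ k < A τ j + d j → ∀ i, σ.symm i < σ.symm j →
        τ.symm i < τ.symm j := by
      intro σ τ h j k h1 h2 h3 h4 i hi
      by_contra hcon
      have hij : i ≠ j := by rintro rfl; exact lt_irrefl _ hi
      have o1 := hord τ j i (htri τ i j hij hcon)
      have o2 := hord σ i j hi
      have hex : ∃ l, 1 ≤ l ∧ l ≤ m + 1 ∧ A σ i < Δ l ∧ Δ (l - 1) < A σ i + d i := by
        rcases hdich σ i with ⟨l, l1, l2, l3, l4⟩ | ⟨l, l1, l2, l3, l4⟩
        · exact ⟨l, l1, by omega, l3, (hstep l l1 (by omega)).trans l4⟩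
        · have := hlt σ i
          exact ⟨l, l1, l2, by linarith, by linarith⟩
      obtain ⟨l, l1, l2, l3, l4⟩ := hex
      have c := (h l l1 l2 i).1 ⟨l3, l4⟩
      have hlk : l ≤ k := by
        by_contra hh
        have := hmono k (l - 1) (by omega) (by omega)
        linarith
      have := hmono l k hlk (by omega)
      linarith [c.1]
    funext j
    rcases hdich σ j with ⟨l, l1, l2, l3, l4⟩ | ⟨l, l1, l2, l3, l4⟩
    · have hc := hcr σ τ hI' j l l1 l2 l3 l4
      have : A σ j = A τ j := psum_congr d σ τ j fun i =>
        ⟨hsub σ τ hI' j l l1 l2 l3 hc.2 i,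
         hsub τ σ (fun k h1 h2 j => (hI' k h1 h2 j).symm) j l l1 l2 hc.1 l4 i⟩
      rw [hE, hE, this]
    rcases hdich τ j with ⟨r, r1, r2, r3, r4⟩ | ⟨r, r1, r2, r3, r4⟩
    · have hI2 := fun k h1 h2 j => (hI' k h1 h2 j).symm
      have hc := hcr τ σ hI2 j r r1 r2 r3 r4
      have : A σ j = A τ j := psum_congr d σ τ j fun i =>
        ⟨hsub σ τ hI' j r r1 r2 hc.1 r4 i, hsub τ σ hI2 j r r1 r2 r3 hc.2 i⟩
      rw [hE, hE, this]
    have h1 := (hregu σ j l l1 l2 l3 l4 l l1 l2).2 rfl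
    have h2 := (hregu τ j r r1 r2 r3 r4 l l1 l2).1 ((hI' l l1 l2 j).1 h1)
    rw [hreg σ j l l1 l2 l3 l4, hreg τ j r r1 r2 r3 r4, h2]
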